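/- Fix n : ℕ and level functions c, c' : Fin (n+1) → ℝ. For v, w : ℝ define Λ^S_{v,w} := {q : ((Fin (n+1) → ℝ) × (Fin (n+1) → ℝ)) × (ℝ × ℝ) | (∀ i, (c i ≤ v → q.1.1 i ≤ q.2.1) ∧ (v ≤ c i → q.2.1 ≤ q.1.1 i)) ∧ (∀ i, (c' i ≤ w → q.1.2 i ≤ q.2.2) ∧ (w ≤ c' i → q.2.2 ≤ q.1.2 i))}. Then ⋂_{v ∈ Set.range c} ⋂_{w ∈ Set.range c'} (Prod.fst '' Λ^S_{v,w}) = (σ_c) ×ˢ (σ_{c'}), where σ_c := {a : Fin (n+1) → ℝ | ∀ i j, c i ≤ c j → a i ≤ a j} and σ_{c'} := {b : Fin (n+1) → ℝ | ∀ i j, c' i ≤ c' j → b i ≤ b j}. -/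

import Mathlib

/-!
A point of the scaffold cone at level `c k` has its auxiliary coordinate squeezed to `a k`.
The projection of that cone therefore says exactly that `a` compares every coordinate with
the `k`-th one as `c` does, and letting `k` vary gives all comparisons `c i ≤ c j → a i ≤ a j`.
In the plane the two coordinates do not interact: each cone is a product, up to reordering factors,
so its projection is a product as well, and the double intersection splits coordinatewise.
-/

open Set

variable {ι ι' α α' β β' : Type*}

/-- The cone, at level `v`, of the one-dimensional scaffold given by the hyperplanes `x = a i`:
the pairs `(a, x)` such that `x` lies weakly above the points of level at most `v` and weakly below
those of level at least `v`. Hyperplanes of level exactly `v` contain the cone. -/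
def scaffoldCone [LE α] [LE β] (c : ι → α) (v : α) : Set ((ι → β) × β) :=
  {p | ∀ i, (c i ≤ v → p.1 i ≤ p.2) ∧ (v ≤ c i → p.2 ≤ p.1 i)}

/-- The cone `Λ^S_{v,w}` of the scaffold for the square of the permutahedral variety, given by the
hyperplanes `x = a i` and `y = b i`. Its points are written `((a, b), (x, y))`, so that `Prod.fst`
forgets the auxiliary point `(x, y)`. -/
def squareScaffoldCone [LE α] [LE α'] [LE β] [LE β'] (c : ι → α) (c' : ι' → α') (v : α) (w : α') :
    Set (((ι → β) × (ι' → β')) × (β × β')) :=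
  Equiv.prodProdProdComm _ _ _ _ ⁻¹' (scaffoldCone c v ×ˢ scaffoldCone c' w)

/-- The cone `σ_c` of the permutahedral fan attached to the level function `c`. Levels may be
repeated, in which case the coordinates in question are tied, so cones of every dimension occur. -/
def permutahedralCone [LE α] [LE β] (c : ι → α) : Set (ι → β) :=
  {a | ∀ i j, c i ≤ c j → a i ≤ a j}

theorem mem_fst_image_scaffoldCone_apply [Preorder α] [Preorder β] {c : ι → α} {k : ι}
    {a : ι → β} :
    a ∈ Prod.fst '' scaffoldCone c (c k) ↔
      ∀ i, (c i ≤ c k → a i ≤ a k) ∧ (c k ≤ c i → a k ≤ a i) := by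
  constructor
  · rintro ⟨⟨a, x⟩, hx, rfl⟩ i
    have hkx : a k ≤ x := (hx k).1 le_rfl
    have hxk : x ≤ a k := (hx k).2 le_rfl
    exact ⟨fun hi => ((hx i).1 hi).trans hxk, fun hi => hkx.trans ((hx i).2 hi)⟩
  · exact fun ha => ⟨(a, a k), ha, rfl⟩

theorem iInter_fst_image_scaffoldCone [Preorder α] [Preorder β] (c : ι → α) :
    ⋂ k, Prod.fst '' scaffoldCone (β := β) c (c k) = permutahedralCone c := by
  ext a
  simp only [mem_iInter, mem_fst_image_scaffoldCone_apply]
  exact ⟨fun ha i j => (ha j i).1, fun ha k i => ⟨ha i k, ha k i⟩⟩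

theorem fst_image_preimage_prodProdProdComm_prod {A B X Y : Type*} (s : Set (A × X))
    (t : Set (B × Y)) :
    Prod.fst '' (Equiv.prodProdProdComm A B X Y ⁻¹' (s ×ˢ t)) =
      (Prod.fst '' s) ×ˢ (Prod.fst '' t) := by
  rw [← Equiv.image_symm_eq_preimage, image_image, prod_image_image_eq]
  rfl

theorem fst_image_squareScaffoldCone [LE α] [LE α'] [LE β] [LE β'] (c : ι → α) (c' : ι' → α')
    (v : α) (w : α') :
    Prod.fst '' squareScaffoldCone (β := β) (β' := β') c c' v w =
      (Prod.fst '' scaffoldCone c v) ×ˢ (Prod.fst '' scaffoldCone c' w) :=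
  fst_image_preimage_prodProdProdComm_prod _ _

theorem iInter_iInter_prod {A B : Type*} {κ κ' : Sort*} [Nonempty κ] [Nonempty κ']
    (s : κ → Set A) (t : κ' → Set B) :
    ⋂ k, ⋂ l, s k ×ˢ t l = (⋂ k, s k) ×ˢ ⋂ l, t l := by
  ext p
  simp only [mem_iInter, mem_prod, forall_and, forall_const]

theorem iInter_proj_square_scaffold_eq_prod_permutahedral_general [Preorder α] [Preorder α']
    [Preorder β] [Preorder β'] [Nonempty ι] [Nonempty ι'] (c : ι → α) (c' : ι' → α') :
    ⋂ v ∈ range c, ⋂ w ∈ range c',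
        Prod.fst '' squareScaffoldCone (β := β) (β' := β') c c' v w =
      permutahedralCone c ×ˢ permutahedralCone c' := by
  simp only [biInter_range, fst_image_squareScaffoldCone]
  rw [iInter_iInter_prod, iInter_fst_image_scaffoldCone, iInter_fst_image_scaffoldCone]

/-- The configuration fan of the scaffold `Λ_S` is the square of the permutahedral fan:
every product of permutahedral cones is exactly the intersection of the projections of the
corresponding scaffold cones. -/
theorem iInter_proj_square_scaffold_eq_prod_permutahedral (n : ℕ)
    (c c' : Fin (n + 1) → ℝ) :
    (⋂ v ∈ Set.range c, ⋂ w ∈ Set.range c',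
      Prod.fst '' {q : ((Fin (n + 1) → ℝ) × (Fin (n + 1) → ℝ)) × (ℝ × ℝ) |
        (∀ i, (c i ≤ v → q.1.1 i ≤ q.2.1) ∧ (v ≤ c i → q.2.1 ≤ q.1.1 i)) ∧
        (∀ i, (c' i ≤ w → q.1.2 i ≤ q.2.2) ∧ (w ≤ c' i → q.2.2 ≤ q.1.2 i))}) =
      {a : Fin (n + 1) → ℝ | ∀ i j, c i ≤ c j → a i ≤ a j} ×ˢ
        {b : Fin (n + 1) → ℝ | ∀ i j, c' i ≤ c' j → b i ≤ b j} :=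
  iInter_proj_square_scaffold_eq_prod_permutahedral_general c c'
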